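/- arXiv:1609.04154 — 2 statements merged into one kernel-verified Lean document; each statement's English description precedes it below -/
import Mathlib

section
/- The two primitive embeddings of A₅ ⊕ A₁ into N(D₆⁴) given by (i₁(A₅), d₆, 0, 0) and (i₂(A₅), d₅, 0, 0) are isomorphic by an automorphism of N(D₆⁴): there exists a linear isometry σ of ℚ²⁴ with σ(N(D₆⁴)) = N(D₆⁴) such that σ maps the sublattice i₁(A₅) × {0} × {0} × {0} onto i₂(A₅) × {0} × {0} × {0} and maps {0} × ℤd₆ × {0} × {0} onto {0} × ℤd₅ × {0} × {0}. -/
noncomputable section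

abbrev V6 : Type := Fin 6 → ℚ

/-- The standard bilinear form on `ℚ⁶`. -/
def bil6 (x y : V6) : ℚ := ∑ i, x i * y i

def d1 : V6 := ![1, -1, 0, 0, 0, 0]
def d2 : V6 := ![0, 1, -1, 0, 0, 0]
def d3 : V6 := ![0, 0, 1, -1, 0, 0]
def d4 : V6 := ![0, 0, 0, 1, -1, 0]
def d5 : V6 := ![0, 0, 0, 0, 1, -1]
def d6 : V6 := ![0, 0, 0, 0, 1, 1]

/-- The `D₆` root lattice: integer vectors with even coordinate sum. -/
def D6 : Submodule ℤ V6 where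
  carrier := {x | (∀ i, ∃ m : ℤ, x i = (m : ℚ)) ∧ ∃ k : ℤ, (∑ i, x i) = 2 * (k : ℚ)}
  add_mem' := by
    rintro x y ⟨hx1, kx, hx2⟩ ⟨hy1, ky, hy2⟩
    refine ⟨fun i => ?_, kx + ky, ?_⟩
    · obtain ⟨m, hm⟩ := hx1 i
      obtain ⟨m', hm'⟩ := hy1 i
      exact ⟨m + m', by push_cast [Pi.add_apply, hm, hm']; ring⟩
    · have : (∑ i, (x + y) i) = (∑ i, x i) + ∑ i, y i := by
        simp [Pi.add_apply, Finset.sum_add_distrib]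
      rw [this, hx2, hy2]; push_cast; ring
  zero_mem' := ⟨fun i => ⟨0, by simp⟩, 0, by simp⟩
  smul_mem' := by
    rintro c x ⟨hx1, k, hx2⟩
    refine ⟨fun i => ?_, c * k, ?_⟩
    · obtain ⟨m, hm⟩ := hx1 i
      refine ⟨c * m, ?_⟩
      have : (c • x) i = (c : ℚ) * x i := by simp [Pi.smul_apply, zsmul_eq_mul]
      rw [this, hm]; push_cast; ring
    · have : (∑ i, (c • x) i) = (c : ℚ) * ∑ i, x i := by
        simp [Pi.smul_apply, zsmul_eq_mul, Finset.mul_sum]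
      rw [this, hx2]; push_cast; ring

/-- The first embedding `i₁(A₅) ⊂ D₆`, spanned by `d₁,…,d₅`. -/
def i1A5 : Submodule ℤ V6 := Submodule.span ℤ {d1, d2, d3, d4, d5}

/-- The second embedding `i₂(A₅) ⊂ D₆`, spanned by `d₁,…,d₄,d₆`. -/
def i2A5 : Submodule ℤ V6 := Submodule.span ℤ {d1, d2, d3, d4, d6}

/-- The Weyl group `W(D₆)`: the subgroup of linear automorphisms of `ℚ⁶` generated by
the reflections in the roots (norm-`2` vectors) of `D₆`. -/
def WeylD6 : Subgroup (V6 ≃ₗ[ℚ] V6) :=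
  Subgroup.closure {s | ∃ r ∈ (D6 : Set V6), bil6 r r = 2 ∧ ∀ x, s x = x - bil6 x r • r}


/-- The nontrivial Dynkin diagram automorphism `g` of `D₆`:
`g(e₆) = -e₆` and `g(eᵢ) = eᵢ` for `i ≤ 5` (it interchanges `d₅` and `d₆`). -/
def gmap (x : V6) : V6 := fun i => if i = 5 then -x 5 else x i

/-- The glue vector `δ₆ = ½(d₁+2d₂+3d₃+4d₄+2d₅+3d₆)`, representing the class `[1]`. -/
def delta6 : V6 :=
  (1/2 : ℚ) • (d1 + (2 : ℚ) • d2 + (3 : ℚ) • d3 + (4 : ℚ) • d4 + (2 : ℚ) • d5 + (3 : ℚ) • d6)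

/-- The glue vector `δ̄₆ = d₁+d₂+d₃+d₄+½(d₅+d₆)`, representing the class `[2]`. -/
def deltaBar6 : V6 := d1 + d2 + d3 + d4 + (1/2 : ℚ) • (d5 + d6)

/-- The glue vector `δ̃₆ = ½(d₁+2d₂+3d₃+4d₄+3d₅+2d₆)`, representing the class `[3]`. -/
def deltaTilde6 : V6 :=
  (1/2 : ℚ) • (d1 + (2 : ℚ) • d2 + (3 : ℚ) • d3 + (4 : ℚ) • d4 + (3 : ℚ) • d5 + (2 : ℚ) • d6)

abbrev V24 : Type := Fin 4 → V6

/-- The standard bilinear form on `ℚ²⁴ = (ℚ⁶)⁴`. -/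
def bil24 (x y : V24) : ℚ := ∑ k, bil6 (x k) (y k)

/-- The glue components `γ₀ = 0`, `γ₁ = δ₆`, `γ₂ = δ̄₆`, `γ₃ = δ̃₆`. -/
def gam : Fin 4 → V6 := ![0, delta6, deltaBar6, deltaTilde6]

/-- The sixteen codewords of the glue code of `N(D₆⁴)`. -/
def codes : Set (Fin 4 → Fin 4) :=
  {![0,0,0,0], ![0,1,2,3], ![0,3,1,2], ![0,2,3,1],
   ![1,1,1,1], ![1,0,3,2], ![1,3,2,0], ![1,2,0,3],
   ![2,2,2,2], ![2,0,1,3], ![2,3,0,1], ![2,1,3,0],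
   ![3,3,3,3], ![3,0,2,1], ![3,1,0,2], ![3,2,1,0]}

/-- The Niemeier lattice `N(D₆⁴)`: the `ℤ`-submodule of `ℚ²⁴` generated by
`D₆ ⊕ D₆ ⊕ D₆ ⊕ D₆` together with the sixteen glue vectors. -/
def NL : Submodule ℤ V24 :=
  Submodule.span ℤ ({x : V24 | ∀ k, x k ∈ D6} ∪ ((fun c : Fin 4 → Fin 4 => fun k => gam (c k)) '' codes))

/-!
The diagram automorphism `g` of `D₆` exchanges `d₅` and `d₆`, hence also `i₁(A₅)` and `i₂(A₅)`. It
does not act on `N(D₆⁴)` factor by factor, because it exchanges the glue classes `[1]` and `[3]`,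
which does not preserve the glue code. Exchanging the last two of the four factors repairs this, and
leaves untouched the two factors in which the sublattices live.
-/

theorem image_eq_self_of_involutive {α : Type*} {f : α → α} (hf : Function.Involutive f)
    {s : Set α} (hs : Set.MapsTo f s s) : f '' s = s :=
  hs.image_subset.antisymm fun x hx => ⟨f x, hs hx, hf x⟩

theorem image_span_int {F M N : Type*} [AddCommGroup M] [AddCommGroup N] [FunLike F M N]
    [AddMonoidHomClass F M N] (f : F) (S : Set M) :
    f '' Submodule.span ℤ S = Submodule.span ℤ (f '' S) :=
  congrArg SetLike.coe (Submodule.map_span (f : M →+ N).toIntLinearMap S)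

section WreathProduct

variable {R M ι κ : Type*} [Semiring R] [AddCommGroup M] [Module R M]

/-- The action on `M^ι` of the element `(f, π)` of the wreath product of `GL(M)` with the
permutations of `ι`: the factors are permuted along `π`, then `f` is applied to each of them.
In coordinates, factor `k` of the image comes from factor `π k`. -/
def wreathEquiv (f : M ≃ₗ[R] M) (π : Equiv.Perm ι) : (ι → M) ≃ₗ[R] (ι → M) :=
  LinearEquiv.funCongrLeft R M π ≪≫ₗ LinearEquiv.piCongrRight fun _ => f

theorem wreathEquiv_apply (f : M ≃ₗ[R] M) (π : Equiv.Perm ι) (x : ι → M) (k : ι) :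
    wreathEquiv f π x k = f (x (π k)) := rfl

theorem image_wreathEquiv_pi (f : M ≃ₗ[R] M) (π : Equiv.Perm ι) (S : ι → Set M) :
    wreathEquiv f π '' Set.univ.pi S = Set.univ.pi fun k => f '' S (π k) := by
  ext y
  constructor
  · rintro ⟨x, hx, rfl⟩ k -
    exact ⟨x (π k), hx (π k) trivial, rfl⟩
  · intro hy
    choose x hxS hxy using fun k => hy k trivial
    refine ⟨fun k => x (π.symm k), fun k _ => ?_, ?_⟩
    · simpa using hxS (π.symm k)
    · ext1 k
      simp [wreathEquiv_apply, hxy]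

/-- The lattice in `M^ι` obtained from the orthogonal sum of copies of `L` by adjoining the glue
vectors `(γ (c k))ₖ` for the words `c` of the glue code `C`. -/
def gluedLattice (L : Submodule ℤ M) (γ : κ → M) (C : Set (ι → κ)) : Submodule ℤ (ι → M) :=
  Submodule.span ℤ ({x | ∀ k, x k ∈ L} ∪ (fun c k => γ (c k)) '' C)

theorem image_wreathEquiv_gluedLattice {f : M ≃ₗ[R] M} {π : Equiv.Perm ι} {L : Submodule ℤ M}
    {γ : κ → M} {C : Set (ι → κ)} {τ : κ → κ} (hL : f '' L = L) (hγ : ∀ a, f (γ a) = γ (τ a))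
    (hC : (fun c => τ ∘ c ∘ π) '' C = C) :
    wreathEquiv f π '' gluedLattice L γ C = gluedLattice L γ C := by
  have base : wreathEquiv f π '' {x | ∀ k, x k ∈ L} = {x | ∀ k, x k ∈ L} := by
    simpa [Set.pi, hL] using image_wreathEquiv_pi f π fun _ => (L : Set M)
  have glue : wreathEquiv f π '' ((fun c k => γ (c k)) '' C) = (fun c k => γ (c k)) '' C := by
    calc wreathEquiv f π '' ((fun c k => γ (c k)) '' C)
        = (fun c k => γ (c k)) '' ((fun c => τ ∘ c ∘ π) '' C) := by
          simp only [Set.image_image]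
          exact Set.image_congr fun c _ => funext fun k => hγ (c (π k))
      _ = (fun c k => γ (c k)) '' C := by rw [hC]
  rw [gluedLattice, image_span_int, Set.image_union, base, glue]

end WreathProduct

theorem bil24_wreathEquiv {f : V6 ≃ₗ[ℚ] V6} (hf : ∀ x y, bil6 (f x) (f y) = bil6 x y)
    (π : Equiv.Perm (Fin 4)) (x y : V24) :
    bil24 (wreathEquiv f π x) (wreathEquiv f π y) = bil24 x y := by
  simp only [bil24, wreathEquiv_apply, hf]
  exact Equiv.sum_comp π fun k => bil6 (x k) (y k)

theorem gmap_involutive : Function.Involutive gmap := fun x => by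
  ext i
  by_cases h : i = 5 <;> simp [gmap, h]

/-- The diagram automorphism `gmap` of `D₆` as a linear automorphism of `ℚ⁶`. -/
def diagramAut : V6 ≃ₗ[ℚ] V6 :=
  LinearEquiv.ofInvolutive
    { toFun := gmap
      map_add' x y := by
        ext i
        by_cases h : i = 5 <;> simp [gmap, h, add_comm]
      map_smul' a x := by
        ext i
        by_cases h : i = 5 <;> simp [gmap, h] }
    gmap_involutive

theorem diagramAut_apply (x : V6) (i : Fin 6) :
    diagramAut x i = if i = 5 then -x 5 else x i := rfl

theorem diagramAut_involutive : Function.Involutive diagramAut := gmap_involutive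

theorem bil6_diagramAut (x y : V6) : bil6 (diagramAut x) (diagramAut y) = bil6 x y := by
  refine Finset.sum_congr rfl fun i _ => ?_
  by_cases h : i = 5 <;> simp [diagramAut_apply, h]

theorem diagramAut_eq_self {x : V6} (hx : x 5 = 0) : diagramAut x = x := by
  ext i
  by_cases h : i = 5 <;> simp [diagramAut_apply, h, hx]

theorem diagramAut_d1 : diagramAut d1 = d1 := diagramAut_eq_self rfl

theorem diagramAut_d2 : diagramAut d2 = d2 := diagramAut_eq_self rfl

theorem diagramAut_d3 : diagramAut d3 = d3 := diagramAut_eq_self rfl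

theorem diagramAut_d4 : diagramAut d4 = d4 := diagramAut_eq_self rfl

theorem diagramAut_d5 : diagramAut d5 = d6 := by
  ext i
  fin_cases i <;> simp [diagramAut_apply, d5, d6]

theorem diagramAut_d6 : diagramAut d6 = d5 := by
  rw [← diagramAut_d5, diagramAut_involutive]

theorem image_diagramAut_i1A5 : diagramAut '' i1A5 = i2A5 := by
  simp only [i1A5, i2A5, image_span_int, Set.image_insert_eq, Set.image_singleton,
    diagramAut_d1, diagramAut_d2, diagramAut_d3, diagramAut_d4, diagramAut_d5]

theorem image_diagramAut_span_d6 :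
    diagramAut '' Submodule.span ℤ {d6} = Submodule.span ℤ {d5} := by
  rw [image_span_int, Set.image_singleton, diagramAut_d6]

theorem sum_diagramAut (x : V6) : ∑ i, diagramAut x i = ∑ i, x i - 2 * x 5 := by
  simp only [Fin.sum_univ_six, diagramAut_apply, Fin.reduceEq, if_true, if_false]
  ring

theorem diagramAut_mem_D6 {x : V6} (hx : x ∈ D6) : diagramAut x ∈ D6 := by
  obtain ⟨hint, n, hn⟩ := hx
  refine ⟨fun i => ?_, ?_⟩
  · obtain ⟨m, hm⟩ := hint i
    by_cases h : i = 5
    · subst h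
      exact ⟨-m, by simp [diagramAut_apply, hm]⟩
    · exact ⟨m, by simp [diagramAut_apply, h, hm]⟩
  · obtain ⟨m, hm⟩ := hint 5
    refine ⟨n - m, ?_⟩
    rw [sum_diagramAut, hn, hm]
    push_cast
    ring

theorem image_diagramAut_D6 : diagramAut '' D6 = D6 :=
  image_eq_self_of_involutive diagramAut_involutive fun _ => diagramAut_mem_D6

theorem diagramAut_gam (a : Fin 4) : diagramAut (gam a) = gam (Equiv.swap 1 3 a) := by
  have swap_zero : Equiv.swap (1 : Fin 4) 3 0 = 0 := by decide
  have swap_two : Equiv.swap (1 : Fin 4) 3 2 = 2 := by decide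
  fin_cases a <;>
    simp [gam, swap_zero, swap_two, delta6, deltaBar6, deltaTilde6, diagramAut_d1, diagramAut_d2,
      diagramAut_d3, diagramAut_d4, diagramAut_d5, diagramAut_d6] <;>
    abel

theorem image_swap_comp_swap_codes :
    (fun c : Fin 4 → Fin 4 => Equiv.swap 1 3 ∘ c ∘ Equiv.swap 2 3) '' codes = codes := by
  refine image_eq_self_of_involutive (fun c => funext fun k => by simp) fun c hc => ?_
  simp only [codes, Set.mem_insert_iff, Set.mem_singleton_iff] at hc ⊢
  rcases hc with rfl | rfl | rfl | rfl | rfl | rfl | rfl | rfl | rfl | rfl | rfl | rfl | rfl |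
    rfl | rfl | rfl <;> decide

/-- The automorphism of `N(D₆⁴)` that applies the diagram automorphism of `D₆` to every factor and
exchanges the last two factors. -/
def niemeierAut : V24 ≃ₗ[ℚ] V24 := wreathEquiv diagramAut (Equiv.swap 2 3)

theorem NL_eq_gluedLattice : NL = gluedLattice D6 gam codes := rfl

theorem image_niemeierAut_NL : niemeierAut '' NL = NL := by
  rw [NL_eq_gluedLattice]
  exact image_wreathEquiv_gluedLattice image_diagramAut_D6 diagramAut_gam
    image_swap_comp_swap_codes

theorem image_niemeierAut_prod_zero_zero (S T : Set V6) :
    niemeierAut '' {x | x 0 ∈ S ∧ x 1 ∈ T ∧ x 2 = 0 ∧ x 3 = 0} =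
      {x | x 0 ∈ diagramAut '' S ∧ x 1 ∈ diagramAut '' T ∧ x 2 = 0 ∧ x 3 = 0} := by
  have setOf_eq_pi (S T : Set V6) : {x : V24 | x 0 ∈ S ∧ x 1 ∈ T ∧ x 2 = 0 ∧ x 3 = 0} =
      Set.univ.pi ![S, T, {0}, {0}] := by
    ext x
    simp [Fin.forall_fin_succ]
  rw [setOf_eq_pi, setOf_eq_pi, niemeierAut, image_wreathEquiv_pi]
  congr 1
  ext1 k
  fin_cases k <;> simp [Equiv.swap_apply_of_ne_of_ne]

/-- The two primitive embeddings of `A₅ ⊕ A₁` in `N(D₆⁴)` given by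
`(i₁(A₅), d₆, 0, 0)` and `(i₂(A₅), d₅, 0, 0)` are isomorphic by an automorphism of `N(D₆⁴)`:
there is a linear isometry `σ` of `ℚ²⁴` preserving `N(D₆⁴)` which carries
`i₁(A₅) × {0} × {0} × {0}` onto `i₂(A₅) × {0} × {0} × {0}` and
`{0} × ℤd₆ × {0} × {0}` onto `{0} × ℤd₅ × {0} × {0}`. -/
theorem embeddings_isomorphic_by_aut_NiemeierD6pow4 :
    ∃ σ : V24 →ₗ[ℚ] V24,
      (∀ x y : V24, bil24 (σ x) (σ y) = bil24 x y) ∧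
      ⇑σ '' (NL : Set V24) = (NL : Set V24) ∧
      ⇑σ '' {x : V24 | x 0 ∈ i1A5 ∧ x 1 = 0 ∧ x 2 = 0 ∧ x 3 = 0} =
        {x : V24 | x 0 ∈ i2A5 ∧ x 1 = 0 ∧ x 2 = 0 ∧ x 3 = 0} ∧
      ⇑σ '' {x : V24 | x 0 = 0 ∧ (∃ c : ℤ, x 1 = c • d6) ∧ x 2 = 0 ∧ x 3 = 0} =
        {x : V24 | x 0 = 0 ∧ (∃ c : ℤ, x 1 = c • d5) ∧ x 2 = 0 ∧ x 3 = 0} := by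
  refine ⟨niemeierAut, bil24_wreathEquiv bil6_diagramAut _, image_niemeierAut_NL, ?_, ?_⟩
  · simpa [image_diagramAut_i1A5] using image_niemeierAut_prod_zero_zero i1A5 {0}
  · simpa [image_diagramAut_span_d6, Submodule.mem_span_singleton, eq_comm] using
      image_niemeierAut_prod_zero_zero {0} (Submodule.span ℤ {d6})
end
end

section
/- The orthogonal complement of the sublattice i₁(A₅) in the root lattice D₆ is the rank-one lattice ℤ·z₆, where z₆ = d₁+2d₂+3d₃+4d₄+2d₅+3d₆ = e₁+e₂+e₃+e₄+e₅+e₆, a vector of norm ⟨z₆,z₆⟩ = 6. -/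
noncomputable section

/-- The vector `z₆ = e₁+e₂+e₃+e₄+e₅+e₆`. -/
def z6 : V6 := ![1, 1, 1, 1, 1, 1]

/- Pairing `x` with `eᵢ - eᵢ₊₁` gives `xᵢ - xᵢ₊₁`, so `x` is orthogonal to `A₅` exactly when all its
coordinates agree. In `D₆` the common coordinate is an integer; conversely every integral multiple
of `(1, …, 1)` lies in `D₆` because six is even. -/

section TypeA

variable {R A ι : Type*}

theorem forall_mem_span_dotProduct_eq_zero_iff [Semiring R] [NonUnitalNonAssocSemiring A]
    [Module R A] [SMulCommClass R A A] [Fintype ι] (x : ι → A) (s : Set (ι → A)) :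
    (∀ m ∈ Submodule.span R s, x ⬝ᵥ m = 0) ↔ ∀ m ∈ s, x ⬝ᵥ m = 0 :=
  Submodule.span_le (p := LinearMap.ker (dotProductBilin ℕ R x))

theorem forall_apply_castSucc_eq_apply_succ_iff {n : ℕ} (x : Fin (n + 1) → A) :
    (∀ i : Fin n, x i.castSucc = x i.succ) ↔ ∀ i, x i = x 0 := by
  refine ⟨fun h i => ?_, fun h i => (h _).trans (h _).symm⟩
  induction i using Fin.induction with
  | zero => rfl
  | succ i ih => exact (h i).symm.trans ih

/-- The simple root `eᵢ - eᵢ₊₁` of the root system `Aₙ`, realised in `Aⁿ⁺¹` for a ring `A` of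
coordinates. Indices start at `0`, one below the Bourbaki numbering. -/
def simpleRootA (A : Type*) [NonAssocRing A] (n : ℕ) (i : Fin n) : Fin (n + 1) → A :=
  Pi.single i.castSucc 1 - Pi.single i.succ 1

variable [NonAssocRing A] {n : ℕ}

theorem dotProduct_simpleRootA (x : Fin (n + 1) → A) (i : Fin n) :
    x ⬝ᵥ simpleRootA A n i = x i.castSucc - x i.succ := by
  rw [simpleRootA, dotProduct_sub, dotProduct_single_one, dotProduct_single_one]

theorem forall_mem_span_simpleRootA_dotProduct_eq_zero_iff [Semiring R] [Module R A]
    [SMulCommClass R A A] (x : Fin (n + 1) → A) :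
    (∀ m ∈ Submodule.span R (Set.range (simpleRootA A n)), x ⬝ᵥ m = 0) ↔ ∀ i, x i = x 0 := by
  simp only [forall_mem_span_dotProduct_eq_zero_iff, Set.forall_mem_range, dotProduct_simpleRootA,
    sub_eq_zero, forall_apply_castSucc_eq_apply_succ_iff]

end TypeA

theorem range_simpleRootA_five : Set.range (simpleRootA ℚ 5) = {d1, d2, d3, d4, d5} := by
  have simpleRootA_eq : simpleRootA ℚ 5 = ![d1, d2, d3, d4, d5] := by
    ext i j
    fin_cases i <;> fin_cases j <;> simp [simpleRootA, d1, d2, d3, d4, d5]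
  rw [simpleRootA_eq]
  simp only [Matrix.range_cons, Matrix.range_empty, Set.union_empty, Set.singleton_union]

theorem bil6_eq_dotProduct (x y : V6) : bil6 x y = x ⬝ᵥ y := rfl

theorem forall_mem_i1A5_bil6_eq_zero_iff (x : V6) :
    (∀ m ∈ i1A5, bil6 x m = 0) ↔ ∀ i, x i = x 0 := by
  simp only [bil6_eq_dotProduct, i1A5, ← range_simpleRootA_five]
  exact forall_mem_span_simpleRootA_dotProduct_eq_zero_iff x

theorem z6_eq_one : z6 = 1 := by
  ext i
  fin_cases i <;> rfl

theorem z6_mem_D6 : z6 ∈ D6 := by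
  rw [z6_eq_one]
  exact ⟨fun _ => ⟨1, by simp⟩, 3, by norm_num⟩

theorem mem_D6_and_forall_apply_eq_iff (x : V6) :
    (x ∈ D6 ∧ ∀ i, x i = x 0) ↔ ∃ c : ℤ, x = c • z6 := by
  constructor
  · rintro ⟨⟨x_integral, -⟩, x_const⟩
    obtain ⟨c, hc⟩ := x_integral 0
    exact ⟨c, funext fun i => by simp [x_const i, hc, z6_eq_one]⟩
  · rintro ⟨c, rfl⟩
    exact ⟨D6.smul_mem c z6_mem_D6, fun i => by simp [z6_eq_one]⟩

theorem z6_eq_sum_simple_roots :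
    z6 = d1 + (2 : ℚ) • d2 + (3 : ℚ) • d3 + (4 : ℚ) • d4 + (2 : ℚ) • d5 + (3 : ℚ) • d6 := by
  ext i
  fin_cases i <;> norm_num [z6, d1, d2, d3, d4, d5, d6]

theorem bil6_z6_z6 : bil6 z6 z6 = 6 := by
  simp [bil6_eq_dotProduct, z6_eq_one]

/-- The orthogonal complement of `i₁(A₅)` in `D₆` is the rank-one lattice
`ℤ·z₆`, where `z₆ = d₁+2d₂+3d₃+4d₄+2d₅+3d₆ = e₁+⋯+e₆` has norm `6`. -/
theorem orthogonal_complement_of_i1A5_in_D6 :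
    z6 = d1 + (2 : ℚ) • d2 + (3 : ℚ) • d3 + (4 : ℚ) • d4 + (2 : ℚ) • d5 + (3 : ℚ) • d6 ∧
    {x : V6 | x ∈ D6 ∧ ∀ m ∈ i1A5, bil6 x m = 0} = {x : V6 | ∃ c : ℤ, x = c • z6} ∧
    bil6 z6 z6 = 6 := by
  refine ⟨z6_eq_sum_simple_roots, ?_, bil6_z6_z6⟩
  ext x
  calc x ∈ D6 ∧ (∀ m ∈ i1A5, bil6 x m = 0)
      ↔ x ∈ D6 ∧ ∀ i, x i = x 0 := and_congr_right' (forall_mem_i1A5_bil6_eq_zero_iff x)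
    _ ↔ ∃ c : ℤ, x = c • z6 := mem_D6_and_forall_apply_eq_iff x
end
end
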